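/- For 0 < |x| < π, one has 1/sin³x = 1/(2x) + 1/x³ + (1/2)·Σ_{n=1}^∞ (1/(2n−1)!)·[ (2^{2n+1} − 1)·|B_{2n+2}|/(n+1) + (2^{2n−1} − 1)·|B_{2n}|/n ]·x^{2n−1}. -/

import Mathlib

open Real

/-!
Expanding each term of the Mittag-Leffler series of `π cot (π z)` as a geometric series and
exchanging the two sums gives, for `0 < ‖z‖ < 1`, a Laurent series whose coefficients are values of
`ζ` at even integers, that is, multiples of `|B₂ₙ|`. After rescaling, `csc z = cot (z / 2) - cot z`
turns it into `csc z = 1 / z + ∑ aₙ z ^ (2n + 1) / (2n + 1)!`. Since `csc'' = 2 csc ^ 3 - csc`, and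
differentiating such an exponential generating function twice just shifts its coefficients,
`csc z ^ 3 = 1 / (2z) + 1 / z ^ 3 + ½ ∑ (aₙ₊₁ + aₙ) z ^ (2n + 1) / (2n + 1)!`.
-/

open Filter Topology
open scoped Nat

theorem abs_bernoulli_two_mul {k : ℕ} (hk : k ≠ 0) :
    |(bernoulli (2 * k) : ℝ)| = (-1) ^ (k + 1) * (bernoulli (2 * k) : ℝ) := by
  have hsum := (hasSum_zeta_nat hk).nonneg fun n ↦ by positivity
  have hnonneg : 0 ≤ (-1) ^ (k + 1) * (bernoulli (2 * k) : ℝ) := by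
    refine nonneg_of_mul_nonneg_right (a := 2 ^ (2 * k - 1) * π ^ (2 * k) / (2 * k)!) ?_
      (by positivity)
    exact hsum.trans_eq (by ring)
  rw [← abs_of_nonneg hnonneg, abs_mul, abs_neg_one_pow, one_mul]

theorem hasSum_one_div_succ_pow_even (k : ℕ) :
    HasSum (fun n : ℕ ↦ 1 / ((n : ℝ) + 1) ^ (2 * k + 2))
      (2 ^ (2 * k + 1) * π ^ (2 * k + 2) * |(bernoulli (2 * k + 2) : ℝ)| / (2 * k + 2)!) := by
  have hzeta := (hasSum_nat_add_iff' 1).mpr (hasSum_zeta_nat k.succ_ne_zero)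
  have habs := abs_bernoulli_two_mul k.succ_ne_zero
  simp only [Nat.succ_eq_add_one, mul_add, mul_one] at hzeta habs
  convert! hzeta using 1
  · push_cast
    rfl
  · rw [habs]
    simp only [Finset.sum_range_one, Nat.cast_zero, zero_pow (Nat.succ_ne_zero _), div_zero,
      sub_zero, Nat.add_one_sub_one]
    ring

theorem hasSum_two_mul_pow_odd_div_pow_even {𝕜 : Type*} [NormedField 𝕜] {z a : 𝕜}
    (h : ‖z‖ < ‖a‖) :
    HasSum (fun k : ℕ ↦ 2 * z ^ (2 * k + 1) / a ^ (2 * k + 2)) (-(1 / (z - a) + 1 / (z + a))) := by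
  have ha : a ≠ 0 := norm_pos_iff.mp ((norm_nonneg z).trans_lt h)
  have hsub : z - a ≠ 0 := sub_ne_zero.mpr (by rintro rfl; exact h.false)
  have hadd : z + a ≠ 0 := fun h0 ↦ by simp [eq_neg_of_add_eq_zero_left h0] at h
  have hratio : ‖(z / a) ^ 2‖ < 1 := by
    rw [norm_pow, norm_div]
    exact pow_lt_one₀ (by positivity) ((div_lt_one (norm_pos_iff.mpr ha)).mpr h) two_ne_zero
  have hden : 1 - (z / a) ^ 2 = -((z - a) * (z + a)) / a ^ 2 := by
    field_simp
    ring
  convert! (hasSum_geometric_of_norm_lt_one hratio).mul_left (2 * z / a ^ 2) using 1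
  · ext k
    rw [← pow_mul, div_pow]
    field_simp
    ring
  · rw [hden]
    field_simp
    ring

theorem mem_integerComplement_of_norm_lt_one {z : ℂ} (hz : z ≠ 0) (h1 : ‖z‖ < 1) :
    z ∈ Complex.integerComplement := by
  rintro ⟨n, rfl⟩
  rw [Complex.norm_intCast] at h1
  norm_cast at hz h1
  exact hz (Int.abs_lt_one_iff.mp h1)

theorem summable_two_mul_pow_odd_div_succ_pow_even {z : ℂ} (h : ‖z‖ < 1) :
    Summable fun p : ℕ × ℕ ↦ 2 * z ^ (2 * p.2 + 1) / ((p.1 : ℂ) + 1) ^ (2 * p.2 + 2) := by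
  have hsquares : Summable fun n : ℕ ↦ 1 / ((n : ℝ) + 1) ^ 2 := by
    simpa using (hasSum_one_div_succ_pow_even 0).summable
  have hgeom := (summable_geometric_of_lt_one (norm_nonneg z) h).mul_left 2
  refine .of_norm_bounded (hsquares.mul_of_nonneg hgeom (fun _ ↦ by positivity)
    fun _ ↦ by positivity) fun ⟨n, k⟩ ↦ ?_
  have hn : (1 : ℝ) ≤ n + 1 := by simp
  have hnorm : ‖(n : ℂ) + 1‖ = n + 1 := mod_cast Complex.norm_natCast (n + 1)
  calc ‖2 * z ^ (2 * k + 1) / ((n : ℂ) + 1) ^ (2 * k + 2)‖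
      = 1 / ((n : ℝ) + 1) ^ (2 * k + 2) * (2 * ‖z‖ ^ (2 * k + 1)) := by
        simp only [norm_div, norm_mul, norm_pow, Complex.norm_ofNat, hnorm]
        ring
    _ ≤ 1 / ((n : ℝ) + 1) ^ 2 * (2 * ‖z‖ ^ k) := by
        gcongr ?_ * (2 * ?_)
        · exact one_div_le_one_div_of_le (by positivity) (pow_le_pow_right₀ hn (by omega))
        · exact pow_le_pow_of_le_one (norm_nonneg z) h.le (by omega)

theorem hasSum_one_div_sub_pi_mul_cot {z : ℂ} (hz : z ≠ 0) (h1 : ‖z‖ < 1) :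
    HasSum (fun k : ℕ ↦
        (2 * π : ℂ) ^ (2 * k + 2) * |(bernoulli (2 * k + 2) : ℝ)| / (2 * k + 2)! * z ^ (2 * k + 1))
      (1 / z - π * Complex.cot (π * z)) := by
  let F : ℕ × ℕ → ℂ := fun p ↦ 2 * z ^ (2 * p.2 + 1) / (p.1 + 1) ^ (2 * p.2 + 2)
  have hF : Summable F := summable_two_mul_pow_odd_div_succ_pow_even h1
  have hrow (n : ℕ) : HasSum (fun k ↦ F (n, k)) (-(1 / (z - (n + 1)) + 1 / (z + (n + 1)))) := by
    have hn : ‖(n : ℂ) + 1‖ = n + 1 := mod_cast Complex.norm_natCast (n + 1)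
    have hza : ‖z‖ < ‖(n : ℂ) + 1‖ := h1.trans_le (by simp [hn])
    simpa only [F] using hasSum_two_mul_pow_odd_div_pow_even hza
  have hcol (k : ℕ) : HasSum (fun n ↦ F (n, k))
      ((2 * π : ℂ) ^ (2 * k + 2) * |(bernoulli (2 * k + 2) : ℝ)| / (2 * k + 2)! *
        z ^ (2 * k + 1)) := by
    convert! (Complex.hasSum_ofReal.mpr (hasSum_one_div_succ_pow_even k)).mul_left
      (2 * z ^ (2 * k + 1)) using 1
    · ext n
      push_cast
      exact (mul_one_div _ _).symm
    · push_cast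
      ring
  have hsum : HasSum F (1 / z - π * Complex.cot (π * z)) := by
    rw [← neg_sub, cot_series_rep' (mem_integerComplement_of_norm_lt_one hz h1), ← tsum_neg,
      ← tsum_congr fun n ↦ (hrow n).tsum_eq, ← hF.tsum_prod]
    exact hF.hasSum
  exact ((Equiv.prodComm ℕ ℕ).hasSum_iff.mpr hsum).prod_fiberwise hcol

theorem norm_div_pi_lt_one {z : ℂ} (hπ : ‖z‖ < π) : ‖z / π‖ < 1 := by
  rwa [norm_div, Complex.norm_of_nonneg pi_pos.le, div_lt_one pi_pos]

theorem hasSum_one_div_sub_cot {z : ℂ} (hz : z ≠ 0) (hπ : ‖z‖ < π) :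
    HasSum (fun k : ℕ ↦
        (2 : ℂ) ^ (2 * k + 2) * |(bernoulli (2 * k + 2) : ℝ)| / (2 * k + 2)! * z ^ (2 * k + 1))
      (1 / z - Complex.cot z) := by
  have hpi : (π : ℂ) ≠ 0 := Complex.ofReal_ne_zero.mpr pi_ne_zero
  have hcot := hasSum_one_div_sub_pi_mul_cot (div_ne_zero hz hpi) (norm_div_pi_lt_one hπ)
  convert! hcot.mul_left (π : ℂ)⁻¹ using 1
  · ext k
    rw [mul_pow, div_pow]
    field_simp
    ring
  · rw [mul_div_cancel₀ z hpi]
    field_simp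

theorem sin_ne_zero_of_norm_lt_pi {z : ℂ} (hz : z ≠ 0) (hπ : ‖z‖ < π) : Complex.sin z ≠ 0 := by
  have hpi : (π : ℂ) ≠ 0 := Complex.ofReal_ne_zero.mpr pi_ne_zero
  rw [← mul_div_cancel₀ z hpi]
  exact sin_pi_mul_ne_zero
    (mem_integerComplement_of_norm_lt_one (div_ne_zero hz hpi) (norm_div_pi_lt_one hπ))

theorem one_div_sin_eq_cot_half_sub_cot {z : ℂ} (h : Complex.sin z ≠ 0) :
    1 / Complex.sin z = Complex.cot (z / 2) - Complex.cot z := by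
  obtain ⟨w, rfl⟩ : ∃ w, z = 2 * w := ⟨z / 2, by ring⟩
  rw [mul_div_cancel_left₀ w two_ne_zero, Complex.cot, Complex.cot]
  rw [Complex.sin_two_mul] at h ⊢
  have hsin : Complex.sin w ≠ 0 := by rintro hw; simp [hw] at h
  have hcos : Complex.cos w ≠ 0 := by rintro hw; simp [hw] at h
  rw [Complex.cos_two_mul]
  field_simp
  ring

/-- The numbers `aₙ` in `csc z = 1 / z + ∑ aₙ z ^ (2n + 1) / (2n + 1)!`: the coefficients of the odd
exponential generating function that is the regular part of the cosecant at `0`. The index is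
shifted so that `n = 0` corresponds to the Bernoulli number `B₂`. -/
noncomputable def cscCoeff (n : ℕ) : ℝ :=
  (2 ^ (2 * n + 1) - 1) * |(bernoulli (2 * n + 2) : ℝ)| / (n + 1)

theorem hasSum_csc_sub_one_div {z : ℂ} (hz : z ≠ 0) (hπ : ‖z‖ < π) :
    HasSum (fun n : ℕ ↦ (cscCoeff n : ℂ) / (2 * n + 1)! * z ^ (2 * n + 1))
      (1 / Complex.sin z - 1 / z) := by
  have hhalf : ‖z / 2‖ < π := by
    rw [norm_div, Complex.norm_ofNat]
    linarith [norm_nonneg z]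
  have hcot_half := hasSum_one_div_sub_cot (div_ne_zero hz two_ne_zero) hhalf
  convert! (hasSum_one_div_sub_cot hz hπ).sub hcot_half using 1
  · ext n
    rw [cscCoeff, Nat.factorial_succ (2 * n + 1), div_pow]
    have hn : (n : ℂ) + 1 ≠ 0 := n.cast_add_one_ne_zero
    have hfact : ((2 * n + 1)! : ℂ) ≠ 0 := mod_cast Nat.factorial_ne_zero _
    push_cast
    rw [show (2 * n + 1 + 1 : ℂ) = 2 * (n + 1) by ring]
    field_simp
    ring
  · rw [one_div_sin_eq_cot_half_sub_cot (sin_ne_zero_of_norm_lt_pi hz hπ), one_div_div]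
    ring

theorem hasSum_deriv_mul_pow {ι : Type*} {c : ι → ℂ} {e : ι → ℕ} {f : ℂ → ℂ} {f' z : ℂ}
    (hf : ∀ᶠ w in 𝓝 z, HasSum (fun i ↦ c i * w ^ e i) (f w)) (hderiv : HasDerivAt f f' z) :
    HasSum (fun i ↦ c i * (e i * z ^ (e i - 1))) f' := by
  obtain ⟨w, hzw, hw⟩ : ∃ w, ‖z‖ < ‖w‖ ∧ HasSum (fun i ↦ c i * w ^ e i) (f w) := by
    by_contra! hle
    have hball : Metric.closedBall (0 : ℂ) ‖z‖ ∈ 𝓝 z := by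
      filter_upwards [hf] with w hw
      simpa using not_lt.mp fun hzw ↦ hle w hzw hw
    simpa [interior_closedBall'] using mem_interior_iff_mem_nhds.mpr hball
  have hdiff (i : ι) : Differentiable ℂ fun v : ℂ ↦ c i * v ^ e i := by fun_prop
  have hbound (i : ι) (v : ℂ) (hv : v ∈ Metric.ball 0 ‖w‖) :
      ‖c i * v ^ e i‖ ≤ ‖c i * w ^ e i‖ := by
    rw [norm_mul, norm_mul, norm_pow, norm_pow]
    gcongr
    exact (mem_ball_zero_iff.mp hv).le
  have htsum := Complex.hasSum_deriv_of_summable_norm hw.summable.norm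
    (fun i ↦ (hdiff i).differentiableOn) Metric.isOpen_ball hbound (mem_ball_zero_iff.mpr hzw)
  have hfun : (fun v ↦ ∑' i, c i * v ^ e i) =ᶠ[𝓝 z] f := hf.mono fun v hv ↦ hv.tsum_eq
  rw [hfun.deriv_eq, hderiv.deriv] at htsum
  simpa using htsum

theorem hasDerivAt_csc_sub_one_div {z : ℂ} (hz : z ≠ 0) (hsin : Complex.sin z ≠ 0) :
    HasDerivAt (fun w ↦ 1 / Complex.sin w - 1 / w)
      (1 / z ^ 2 - Complex.cos z / Complex.sin z ^ 2) z := by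
  simp only [one_div]
  convert! ((Complex.hasDerivAt_sin z).fun_inv hsin).sub (hasDerivAt_inv hz) using 1
  ring

theorem hasDerivAt_deriv_csc_sub_one_div {z : ℂ} (hz : z ≠ 0) (hsin : Complex.sin z ≠ 0) :
    HasDerivAt (fun w ↦ 1 / w ^ 2 - Complex.cos w / Complex.sin w ^ 2)
      (2 / Complex.sin z ^ 3 - 1 / Complex.sin z - 2 / z ^ 3) z := by
  simp only [one_div]
  convert! ((hasDerivAt_pow 2 z).fun_inv (pow_ne_zero 2 hz)).sub ((Complex.hasDerivAt_cos z).fun_div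
    ((Complex.hasDerivAt_sin z).fun_pow 2) (pow_ne_zero 2 hsin)) using 1
  field_simp
  push_cast
  linear_combination -2 * Complex.sin z * z ^ 4 * Complex.sin_sq_add_cos_sq z

theorem div_factorial_succ_mul {𝕜 : Type*} [Field 𝕜] [CharZero 𝕜] (c : 𝕜) (n : ℕ) :
    c / (n + 1)! * (n + 1 : ℕ) = c / n ! := by
  have hn : ((n + 1 : ℕ) : 𝕜) ≠ 0 := Nat.cast_ne_zero.mpr n.succ_ne_zero
  rw [Nat.factorial_succ, Nat.cast_mul]
  field_simp

theorem eventually_ne_zero_and_norm_lt_pi {z : ℂ} (hz : z ≠ 0) (hπ : ‖z‖ < π) :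
    ∀ᶠ w : ℂ in 𝓝 z, w ≠ 0 ∧ ‖w‖ < π :=
  (eventually_ne_nhds hz).and (continuous_norm.continuousAt.eventually_lt_const hπ)

theorem hasSum_deriv_csc_sub_one_div {z : ℂ} (hz : z ≠ 0) (hπ : ‖z‖ < π) :
    HasSum (fun n : ℕ ↦ (cscCoeff n : ℂ) / (2 * n)! * z ^ (2 * n))
      (1 / z ^ 2 - Complex.cos z / Complex.sin z ^ 2) := by
  have hderiv := hasSum_deriv_mul_pow
    ((eventually_ne_zero_and_norm_lt_pi hz hπ).mono fun w hw ↦ hasSum_csc_sub_one_div hw.1 hw.2)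
    (hasDerivAt_csc_sub_one_div hz (sin_ne_zero_of_norm_lt_pi hz hπ))
  simpa only [← mul_assoc, div_factorial_succ_mul, Nat.add_sub_cancel] using hderiv

theorem hasSum_deriv_deriv_csc_sub_one_div {z : ℂ} (hz : z ≠ 0) (hπ : ‖z‖ < π) :
    HasSum (fun n : ℕ ↦ (cscCoeff (n + 1) : ℂ) / (2 * n + 1)! * z ^ (2 * n + 1))
      (2 / Complex.sin z ^ 3 - 1 / Complex.sin z - 2 / z ^ 3) := by
  have hderiv := hasSum_deriv_mul_pow
    ((eventually_ne_zero_and_norm_lt_pi hz hπ).mono fun w hw ↦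
      hasSum_deriv_csc_sub_one_div hw.1 hw.2)
    (hasDerivAt_deriv_csc_sub_one_div hz (sin_ne_zero_of_norm_lt_pi hz hπ))
  rw [← hasSum_nat_add_iff' 1] at hderiv
  simpa [mul_add, ← mul_assoc, div_factorial_succ_mul, -Nat.cast_add] using hderiv

theorem hasSum_two_mul_csc_cube_sub {z : ℂ} (hz : z ≠ 0) (hπ : ‖z‖ < π) :
    HasSum (fun n : ℕ ↦ ((cscCoeff (n + 1) + cscCoeff n : ℝ) : ℂ) / (2 * n + 1)! * z ^ (2 * n + 1))
      (2 / Complex.sin z ^ 3 - 1 / z - 2 / z ^ 3) := by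
  convert! (hasSum_deriv_deriv_csc_sub_one_div hz hπ).add (hasSum_csc_sub_one_div hz hπ) using 1
  · ext n
    push_cast
    ring
  · ring

theorem csc_cube_series_general (z : ℂ) (h1 : 0 < ‖z‖) (h2 : ‖z‖ < π) :
    1 / Complex.sin z ^ 3 =
      1 / (2 * z) + 1 / z ^ 3 + (1 / 2) * ∑' n : ℕ,
        (1 / (Nat.factorial (2 * (n + 1) - 1)) : ℂ) *
          ((2 ^ (2 * (n + 1) + 1) - 1) * |(bernoulli (2 * (n + 1) + 2) : ℝ)| / ((n + 1) + 1) +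
            (2 ^ (2 * (n + 1) - 1) - 1) * |(bernoulli (2 * (n + 1)) : ℝ)| / (n + 1)) *
          z ^ (2 * (n + 1) - 1) := by
  have hterm (n : ℕ) : (1 / (Nat.factorial (2 * (n + 1) - 1)) : ℂ) *
      ((2 ^ (2 * (n + 1) + 1) - 1) * |(bernoulli (2 * (n + 1) + 2) : ℝ)| / ((n + 1) + 1) +
        (2 ^ (2 * (n + 1) - 1) - 1) * |(bernoulli (2 * (n + 1)) : ℝ)| / (n + 1)) *
      z ^ (2 * (n + 1) - 1) =
      ((cscCoeff (n + 1) + cscCoeff n : ℝ) : ℂ) / (2 * n + 1)! * z ^ (2 * n + 1) := by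
    rw [cscCoeff, cscCoeff, show 2 * (n + 1) - 1 = 2 * n + 1 by omega]
    push_cast
    ring_nf
  have hz : z ≠ 0 := norm_pos_iff.mp h1
  rw [tsum_congr hterm, (hasSum_two_mul_csc_cube_sub hz h2).tsum_eq]
  field_simp
  ring

theorem csc_cube_series (x : ℝ) (h1 : 0 < |x|) (h2 : |x| < π) :
    1 / Real.sin x ^ 3 =
      1 / (2 * x) + 1 / x ^ 3 + (1 / 2) * ∑' n : ℕ,
        (1 / (Nat.factorial (2 * (n + 1) - 1)) : ℝ) *
          ((2 ^ (2 * (n + 1) + 1) - 1) * |(bernoulli (2 * (n + 1) + 2) : ℝ)| / ((n + 1) + 1) +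
            (2 ^ (2 * (n + 1) - 1) - 1) * |(bernoulli (2 * (n + 1)) : ℝ)| / (n + 1)) *
          x ^ (2 * (n + 1) - 1) := by
  refine Complex.ofReal_injective ?_
  push_cast
  exact csc_cube_series_general x (by simpa using h1) (by simpa using h2)
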